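/- Every integer greater than two, except for 11, can be written as the sum of a prime and a square-free number which is co-prime to three. -/

import Mathlib

/-!
For large `n` this is Chebyshev's method in residue classes. Up to a power of `k`, the product of
the `m ≤ kM` with `m ≡ a (mod k)` is `M !` to within a factor of order `kM`. Comparing the prime
factorizations of the two bounds `∑ log p`, over the primes `p ≡ a (mod k)` in `(M, kM]`, by
`M (log k + ∑ l ∣ k, log l / (l - 1))`, and bootstrapping from this upper bound gives a lower bound
for `k = 12`. Choose `a` modulo `12` such that `3` and `4` do not divide `n - p` for
`p ≡ a (mod 12)`. If no such `n - p` is squarefree, then each of these primes lies in the class of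
`n` modulo `q ^ 2` for some prime `q ≥ 5`, and for `n ≥ 10 ^ 6` the upper bounds for these classes
modulo `12 q ^ 2` add up to less than the lower bound for the class modulo `12`.

Below `10 ^ 6` the numbers are sieved, a set of naturals being encoded by the binary digits of a
single natural number; the primes below `100` suffice as first summands.
-/

open Finset Real
open ArithmeticFunction hiding log
open scoped Nat

theorem sum_le_sum_sum_filter_of_exists {ι κ M : Type*} [AddCommMonoid M] [PartialOrder M]
    [IsOrderedAddMonoid M] {s : Finset ι} {t : Finset κ} {f : ι → M} {r : ι → κ → Prop}
    [∀ i j, Decidable (r i j)] (hcover : ∀ i ∈ s, ∃ j ∈ t, r i j) (hf : ∀ i ∈ s, 0 ≤ f i) :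
    ∑ i ∈ s, f i ≤ ∑ j ∈ t, ∑ i ∈ s with r i j, f i := by
  simp only [sum_filter]
  rw [sum_comm]
  refine sum_le_sum fun i hi ↦ ?_
  obtain ⟨j, hj, hij⟩ := hcover i hi
  calc f i = if r i j then f i else 0 := (if_pos hij).symm
    _ ≤ ∑ j ∈ t, if r i j then f i else 0 :=
      single_le_sum (f := fun j ↦ if r i j then f i else 0)
        (fun j _ ↦ ite_nonneg (hf i hi) le_rfl) hj

section ResidueCount

variable {k : ℕ}

/-- The integers of the interval `(x, y]` in the residue class `a` modulo `k`. -/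
def residueIoc (a : ZMod k) (x y : ℕ) : Finset ℕ := {m ∈ Ioc x y | ((m : ℕ) : ZMod k) = a}

theorem mem_residueIoc {a : ZMod k} {x y m : ℕ} :
    m ∈ residueIoc a x y ↔ (x < m ∧ m ≤ y) ∧ (m : ZMod k) = a := by
  simp [residueIoc]

theorem residueIoc_subset_Ioc (a : ZMod k) (x y : ℕ) : residueIoc a x y ⊆ Ioc x y :=
  filter_subset _ _

theorem residueIoc_mono_right (a : ZMod k) (x : ℕ) : Monotone (residueIoc a x) := fun _ _ h ↦
  filter_subset_filter _ (Ioc_subset_Ioc_right h)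

theorem residueIoc_mono_left (a : ZMod k) (y : ℕ) {x x' : ℕ} (h : x ≤ x') :
    residueIoc a x' y ⊆ residueIoc a x y :=
  filter_subset_filter _ (Ioc_subset_Ioc_left h)

theorem sum_residueIoc_consecutive (a : ZMod k) {M : Type*} [AddCommMonoid M] (f : ℕ → M)
    {x y z : ℕ} (hxy : x ≤ y) (hyz : y ≤ z) :
    ∑ m ∈ residueIoc a x y, f m + ∑ m ∈ residueIoc a y z, f m = ∑ m ∈ residueIoc a x z, f m := by
  simp only [residueIoc, sum_filter]
  exact sum_Ioc_consecutive _ hxy hyz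

theorem natCast_mul_eq_iff {a : ZMod k} {d m : ℕ} (hd : d.Coprime k) :
    ((d * m : ℕ) : ZMod k) = a ↔ (m : ZMod k) = a * (d : ZMod k)⁻¹ := by
  have hunit := ZMod.coe_mul_inv_eq_one d hd
  rw [Nat.cast_mul]
  constructor
  · rintro rfl
    linear_combination -(m : ZMod k) * hunit
  · intro h
    rw [h]
    linear_combination a * hunit

/-- The number of positive integers `m ≤ x` with `m ≡ a (mod k)`. -/
def residueCount (a : ZMod k) (x : ℕ) : ℕ := #(residueIoc a 0 x)

theorem residueCount_mono (a : ZMod k) : Monotone (residueCount a) := fun _ _ h ↦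
  card_le_card (residueIoc_mono_right a 0 h)

theorem card_residueIoc_filter_dvd (a : ZMod k) {d : ℕ} (hd : d.Coprime k) (hd0 : 0 < d) (x : ℕ) :
    #{m ∈ residueIoc a 0 x | d ∣ m} = residueCount (a * (d : ZMod k)⁻¹) (x / d) := by
  refine (card_nbij (d * ·) ?_ (fun _ _ _ _ h ↦ Nat.eq_of_mul_eq_mul_left hd0 h) ?_).symm
  · intro m hm
    simp_all [mem_residueIoc, Nat.le_div_iff_mul_le, mul_comm d m, ← natCast_mul_eq_iff hd]
  · rintro m hm
    obtain ⟨hmem, j, rfl⟩ : m ∈ residueIoc a 0 x ∧ d ∣ m := by simpa using hm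
    rw [mem_residueIoc, natCast_mul_eq_iff hd] at hmem
    refine ⟨j, mem_coe.2 (mem_residueIoc.2 ⟨⟨?_, ?_⟩, hmem.2⟩), rfl⟩
    · exact Nat.pos_of_mul_pos_left hmem.1.1
    · exact (Nat.le_div_iff_mul_le hd0).2 (mul_comm d j ▸ hmem.1.2)

variable [NeZero k]

theorem card_residueIoc_add_self (a : ZMod k) (n : ℕ) : #(residueIoc a n (n + k)) = 1 := by
  have hperiod : Function.Periodic (fun m : ℕ ↦ (m : ZMod k) = a) k := fun m ↦ by simp
  have hresidues : {m ∈ range k | ((m : ℕ) : ZMod k) = a} = {a.val} := by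
    ext m
    simp only [mem_filter, mem_range, mem_singleton]
    constructor
    · rintro ⟨hm, rfl⟩
      exact (ZMod.val_cast_of_lt hm).symm
    · rintro rfl
      exact ⟨a.val_lt, ZMod.natCast_zmod_val a⟩
  calc #(residueIoc a n (n + k))
      = #{m ∈ Ico (n + 1) (n + 1 + k) | ((m : ℕ) : ZMod k) = a} := by
        congr 1; ext m; simp only [mem_residueIoc, mem_filter, mem_Ico]; grind
    _ = #{m ∈ range k | ((m : ℕ) : ZMod k) = a} := by
        rw [Nat.filter_Ico_card_eq_of_periodic _ _ _ hperiod, Nat.count_eq_card_filter_range]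
    _ = 1 := by rw [hresidues, card_singleton]

theorem residueCount_add_mul (a : ZMod k) (x j : ℕ) :
    residueCount a (x + k * j) = residueCount a x + j := by
  induction j with
  | zero => simp
  | succ j ih =>
    have hsplit := sum_residueIoc_consecutive a (fun _ ↦ 1) (x + k * j).zero_le
      (Nat.le_add_right _ k)
    simp only [← card_eq_sum_ones, card_residueIoc_add_self] at hsplit
    rw [Nat.mul_succ, ← add_assoc, residueCount, ← hsplit, ← add_assoc, ← ih, residueCount]

theorem residueCount_eq (a : ZMod k) (x : ℕ) :
    residueCount a x = residueCount a (x % k) + x / k := by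
  rw [← residueCount_add_mul, Nat.mod_add_div]

theorem div_le_residueCount (a : ZMod k) (x : ℕ) : x / k ≤ residueCount a x :=
  residueCount_eq a x ▸ Nat.le_add_left _ _

theorem residueCount_le (a : ZMod k) (x : ℕ) :
    residueCount a x ≤ x / k + residueCount a (min k x) := by
  rw [residueCount_eq, add_comm]
  gcongr
  exact residueCount_mono a (le_min (Nat.mod_lt x (NeZero.pos k)).le (Nat.mod_le x k))

end ResidueCount

section LogSums

theorem log_eq_sum_vonMangoldt {m X : ℕ} (hm : m ≠ 0) (hmX : m ≤ X) :
    log m = ∑ d ∈ Ioc 0 X with d ∣ m, Λ d := by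
  rw [← vonMangoldt_sum]
  congr 1
  ext d
  simp only [Nat.mem_divisors, mem_filter, mem_Ioc]
  exact ⟨fun h ↦ ⟨⟨Nat.pos_of_dvd_of_pos h.1 (Nat.pos_of_ne_zero hm),
    (Nat.le_of_dvd (Nat.pos_of_ne_zero hm) h.1).trans hmX⟩, h.1⟩, fun h ↦ ⟨h.2, hm⟩⟩

theorem sum_log_eq_sum_vonMangoldt_mul_card {s : Finset ℕ} {X : ℕ} (hs : s ⊆ Ioc 0 X) :
    ∑ m ∈ s, log m = ∑ d ∈ Ioc 0 X, Λ d * #{m ∈ s | d ∣ m} := by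
  calc ∑ m ∈ s, log m = ∑ m ∈ s, ∑ d ∈ Ioc 0 X with d ∣ m, Λ d :=
        sum_congr rfl fun m hm ↦
          have hmX := mem_Ioc.1 (hs hm)
          log_eq_sum_vonMangoldt hmX.1.ne' hmX.2
    _ = ∑ d ∈ Ioc 0 X, ∑ m ∈ s with d ∣ m, Λ d := sum_comm' (by grind)
    _ = ∑ d ∈ Ioc 0 X, Λ d * #{m ∈ s | d ∣ m} := by simp [mul_comm]

theorem log_factorial_eq_sum_log (M : ℕ) : log (M ! : ℕ) = ∑ m ∈ Ioc 0 M, log m := by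
  induction M with
  | zero => simp
  | succ M ih =>
    rw [Nat.factorial_succ, Nat.cast_mul, log_mul (by positivity) (by positivity), ih,
      sum_Ioc_succ_top M.zero_le, add_comm]

theorem log_factorial_eq_sum_vonMangoldt {M X : ℕ} (hMX : M ≤ X) :
    log (M ! : ℕ) = ∑ d ∈ Ioc 0 X, Λ d * (M / d : ℕ) := by
  rw [log_factorial_eq_sum_log,
    sum_log_eq_sum_vonMangoldt_mul_card (Ioc_subset_Ioc_right hMX)]
  simp only [Nat.Ioc_filter_dvd_card_eq_div]

theorem sum_vonMangoldt_mul_div_of_dvd {l M X : ℕ} (hl : l.Prime) (hMX : M ≤ X) :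
    ∑ d ∈ Ioc 0 X with l ∣ d, Λ d * (M / d : ℕ) = (M !).factorization l * log l := by
  rw [Nat.factorization_factorial hl (Nat.lt_succ_self _), Nat.cast_sum, sum_mul, eq_comm]
  refine sum_of_injOn (l ^ ·) (fun _ _ _ _ h ↦ Nat.pow_right_injective hl.two_le h) ?_ ?_ ?_
  · intro e he
    obtain ⟨he0, heM⟩ : e ≠ 0 ∧ l ^ e ≤ M := by
      have hM : M ≠ 0 := by rintro rfl; simp at he
      simpa [Nat.one_le_iff_ne_zero, Nat.le_log_iff_pow_le hl.one_lt hM] using he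
    simp [hl.pos, heM.trans hMX, dvd_pow_self l he0]
  · intro d hd hdim
    obtain ⟨-, hld⟩ := mem_filter.1 hd
    by_cases hpow : IsPrimePow d
    · obtain ⟨p, e, hp, he, rfl⟩ := (isPrimePow_nat_iff _).1 hpow
      obtain rfl := (Nat.prime_dvd_prime_iff_eq hl hp).1 (hl.dvd_of_dvd_pow hld)
      have hlarge : M < l ^ e := by
        by_contra! hle
        exact hdim ⟨e, by simpa using ⟨he, Nat.le_log_of_pow_le hl.one_lt hle⟩, rfl⟩
      simp [Nat.div_eq_of_lt hlarge]
    · simp [vonMangoldt_eq_zero_iff.2 hpow]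
  · intro e he
    rw [vonMangoldt_apply_pow (by grind), vonMangoldt_apply_prime hl, mul_comm]

theorem sum_not_coprime_vonMangoldt_mul {k : ℕ} (hk : k ≠ 0) (s : Finset ℕ) (f : ℕ → ℝ) :
    ∑ d ∈ s with ¬ d.Coprime k, Λ d * f d =
      ∑ l ∈ k.primeFactors, ∑ d ∈ s with l ∣ d, Λ d * f d := by
  simp only [sum_filter]
  rw [sum_comm]
  refine sum_congr rfl fun d _ ↦ ?_
  by_cases hd : IsPrimePow d
  · obtain ⟨p, e, hp, he, rfl⟩ := (isPrimePow_nat_iff _).1 hd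
    have hdvd : ∀ l ∈ k.primeFactors, (l ∣ p ^ e ↔ l = p) := fun l hl ↦
      ⟨fun h ↦ (Nat.prime_dvd_prime_iff_eq (Nat.prime_of_mem_primeFactors hl) hp).1
        ((Nat.prime_of_mem_primeFactors hl).dvd_of_dvd_pow h), fun h ↦ h ▸ dvd_pow_self _ he.ne'⟩
    have hcop : ¬ (p ^ e).Coprime k ↔ p ∈ k.primeFactors := by
      rw [Nat.coprime_pow_left_iff he, hp.coprime_iff_not_dvd, not_not,
        Nat.mem_primeFactors_of_ne_zero hk]
      simp [hp]
    rw [sum_congr rfl fun l hl ↦ if_congr (hdvd l hl) rfl rfl, sum_ite_eq', if_congr hcop rfl rfl]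
  · simp [vonMangoldt_eq_zero_iff.2 hd]

theorem factorization_factorial_mul_log_le {l : ℕ} (hl : l.Prime) (M : ℕ) :
    (M !).factorization l * log l ≤ M * (log l / (l - 1)) := by
  have hdiv : ((M !).factorization l : ℝ) ≤ M / (l - 1) :=
    calc ((M !).factorization l : ℝ) ≤ (M / (l - 1) : ℕ) :=
          mod_cast Nat.factorization_factorial_le_div_pred hl M
      _ ≤ M / (l - 1 : ℕ) := Nat.cast_div_le
      _ = M / (l - 1) := by rw [Nat.cast_pred hl.pos]
  calc (M !).factorization l * log l ≤ M / (l - 1) * log l := by gcongr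
    _ = M * (log l / (l - 1)) := by ring

theorem le_pred_mul_factorization_factorial_add {l M : ℕ} (hl : l.Prime) (hM : M ≠ 0) :
    M ≤ (l - 1) * ((M !).factorization l + Nat.log l M + 1) := by
  have hdigits : (l.digits M).sum ≤ (Nat.log l M + 1) * (l - 1) := by
    rw [← Nat.length_digits l M hl.one_lt hM]
    exact List.sum_le_card_nsmul _ _ fun d hd ↦
      Nat.le_pred_of_lt (Nat.digits_lt_base hl.one_lt hd)
  have hlegendre := Nat.sub_one_mul_factorization_factorial (n := M) hl
  calc M ≤ (l - 1) * (M !).factorization l + (l.digits M).sum := by omega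
    _ ≤ (l - 1) * (M !).factorization l + (Nat.log l M + 1) * (l - 1) := by gcongr
    _ = (l - 1) * ((M !).factorization l + Nat.log l M + 1) := by ring

theorem le_factorization_factorial_mul_log {l M : ℕ} (hl : l.Prime) (hM : M ≠ 0) :
    M * (log l / (l - 1)) - (log M + log l) ≤ (M !).factorization l * log l := by
  have hl1 : (1 : ℝ) < l := mod_cast hl.one_lt
  have hbound : (M : ℝ) / (l - 1) ≤ (M !).factorization l + Nat.log l M + 1 := by
    rw [div_le_iff₀' (by linarith), ← Nat.cast_pred hl.pos]
    exact_mod_cast le_pred_mul_factorization_factorial_add hl hM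
  have hlog : Nat.log l M * log l ≤ log M := by
    rw [← log_pow]
    exact log_le_log (by positivity) (mod_cast Nat.pow_log_le_self l hM)
  have hmul := mul_le_mul_of_nonneg_right hbound (log_nonneg hl1.le)
  linear_combination hmul + hlog

end LogSums

section LogProgression

variable {k : ℕ}

theorem sum_log_residueIoc_eq {a : ZMod k} (ha : IsUnit a) (X : ℕ) :
    ∑ m ∈ residueIoc a 0 X, log m =
      ∑ d ∈ Ioc 0 X with d.Coprime k, Λ d * residueCount (a * (d : ZMod k)⁻¹) (X / d) := by
  rw [sum_log_eq_sum_vonMangoldt_mul_card (residueIoc_subset_Ioc a 0 X), sum_filter]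
  refine sum_congr rfl fun d hd ↦ ?_
  split_ifs with hcop
  · rw [card_residueIoc_filter_dvd a hcop (mem_Ioc.1 hd).1]
  · have hempty : {m ∈ residueIoc a 0 X | d ∣ m} = ∅ := by
      refine filter_eq_empty_iff.2 fun m hm hdm ↦ hcop ?_
      obtain rfl := (mem_residueIoc.1 hm).2
      exact ((ZMod.isUnit_iff_coprime m k).1 ha).coprime_dvd_left hdm
    simp [hempty]

variable [NeZero k]

theorem exists_sum_residueIoc_mul_succ (a : ZMod k) (f : ℕ → ℝ) (M : ℕ) :
    ∃ m, k * M < m ∧ m ≤ k * (M + 1) ∧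
      ∑ i ∈ residueIoc a 0 (k * (M + 1)), f i = ∑ i ∈ residueIoc a 0 (k * M), f i + f m := by
  obtain ⟨m, hm⟩ := card_eq_one.1 (card_residueIoc_add_self a (k * M))
  have hmem := mem_residueIoc.1 (hm ▸ mem_singleton_self m)
  refine ⟨m, hmem.1.1, hmem.1.2, ?_⟩
  rw [Nat.mul_succ, ← sum_residueIoc_consecutive a f (k * M).zero_le (Nat.le_add_right _ k), hm,
    sum_singleton]

theorem sum_log_residueIoc_le (a : ZMod k) (M : ℕ) :
    ∑ m ∈ residueIoc a 0 (k * M), log m ≤ M * log k + log (M ! : ℕ) := by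
  induction M with
  | zero => simp [residueIoc]
  | succ M ih =>
    obtain ⟨m, hkm, hmk, hsum⟩ := exists_sum_residueIoc_mul_succ a (log ·) M
    have hm : log m ≤ log k + log (M + 1 : ℕ) := by
      rw [← log_mul (NeZero.ne _) (by positivity)]
      exact log_le_log (mod_cast (Nat.zero_le _).trans_lt hkm) (mod_cast hmk)
    rw [hsum, Nat.factorial_succ, Nat.cast_mul, log_mul (by positivity) (by positivity)]
    push_cast at hm ⊢
    linarith

theorem le_sum_log_residueIoc (a : ZMod k) (M : ℕ) :
    M * log k + log (M ! : ℕ) ≤ ∑ m ∈ residueIoc a 0 (k * (M + 1)), log m := by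
  induction M with
  | zero => simpa using sum_nonneg fun m _ ↦ log_natCast_nonneg m
  | succ M ih =>
    obtain ⟨m, hkm, -, hsum⟩ := exists_sum_residueIoc_mul_succ a (log ·) (M + 1)
    have hm : log k + log (M + 1 : ℕ) ≤ log m := by
      rw [← log_mul (NeZero.ne _) (by positivity)]
      exact log_le_log (by have := NeZero.pos k; positivity) (mod_cast hkm.le)
    rw [hsum, Nat.factorial_succ, Nat.cast_mul, log_mul (by positivity) (by positivity)]
    push_cast at hm ⊢
    linarith

end LogProgression

section LogEstimates

theorem log_le_log_add_sub_div {x y : ℝ} (hx : 0 < x) (hy : 0 < y) :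
    log x ≤ log y + (x - y) / y := by
  have h := log_le_sub_one_of_pos (div_pos hx hy)
  rw [log_div hx.ne' hy.ne'] at h
  rw [sub_div, div_self hy.ne']
  linarith

theorem log_le_div_mul_log_of_pow_le_pow {m n a b : ℕ} (hm : 0 < m) (hb : 0 < b)
    (h : m ^ b ≤ n ^ a) : log m ≤ a / b * log n := by
  have hlog : log (m ^ b : ℕ) ≤ log (n ^ a : ℕ) :=
    log_le_log (by positivity) (mod_cast h)
  push_cast at hlog
  rw [log_pow, log_pow] at hlog
  rw [div_mul_eq_mul_div, le_div_iff₀ (by positivity)]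
  linarith

theorem add_log_div_sq_le {A y : ℝ} (hA : 1 ≤ A) (hy : 2 ≤ y) :
    (A + log (y + 1)) / (y + 1) ^ 2 ≤
      (A + 1 + log y) / y - (A + 1 + log (y + 1)) / (y + 1) := by
  have hlog := log_le_log_add_sub_div (x := y + 1) (y := y) (by linarith) (by linarith)
  have hpos : 0 ≤ log (y + 1) := log_nonneg (by linarith)
  rw [add_sub_cancel_left] at hlog
  have hlog2 : log 2 ≤ log (y + 1) := log_le_log two_pos (by linarith)
  set B := A + log (y + 1)
  have hB : 0 ≤ B * y - (y + 1) := by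
    nlinarith [log_two_gt_d9]
  have hidentity : (B + 1 - 1 / y) / y - (B + 1) / (y + 1) - B / (y + 1) ^ 2 =
      (B * y - (y + 1)) / (y ^ 2 * (y + 1) ^ 2) := by
    field_simp
    ring
  have hgap : 0 ≤ (B * y - (y + 1)) / (y ^ 2 * (y + 1) ^ 2) := by positivity
  calc B / (y + 1) ^ 2 ≤ (B + 1 - 1 / y) / y - (B + 1) / (y + 1) := by linarith
    _ ≤ (A + 1 + log y) / y - (A + 1 + log (y + 1)) / (y + 1) := by
      have hnum : B + 1 - 1 / y ≤ A + 1 + log y := by simp only [B]; linarith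
      have hden : A + 1 + log (y + 1) = B + 1 := by simp only [B]; ring
      rw [hden]
      gcongr

theorem sum_Ioc_add_log_div_sq_le {A : ℝ} (hA : 1 ≤ A) {x : ℕ} (hx : 2 ≤ x) (r : ℕ) :
    ∑ q ∈ Ioc x r, (A + log q) / q ^ 2 ≤ (A + 1 + log x) / x := by
  have htelescope : ∀ r, x ≤ r → ∑ q ∈ Ioc x r, (A + log q) / q ^ 2 ≤
      (A + 1 + log x) / x - (A + 1 + log r) / r := by
    intro r hr
    induction r, hr using Nat.le_induction with
    | base => simp
    | succ r hxr ih =>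
      rw [sum_Ioc_succ_top hxr]
      have hstep := add_log_div_sq_le hA (y := r) (mod_cast hx.trans hxr)
      push_cast
      linarith
  have hnonneg : ∀ r : ℕ, 0 ≤ (A + 1 + log r) / r := fun r ↦ by
    have := log_natCast_nonneg r
    positivity
  obtain hxr | hrx := le_total x r
  · linarith [htelescope r hxr, hnonneg r]
  · rw [Ioc_eq_empty_of_le hrx, sum_empty]
    exact hnonneg x

end LogEstimates

section Chebyshev

variable {k : ℕ}

/-- The constant `C` with `excess a M = C * M + O(log M)` for all units `a` modulo `k`: the term
`log k` is the growth of the product of a residue class relative to `M !`, and `log l / (l - 1)`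
that of the `l`-part of `M !`. -/
noncomputable def chebyshevConst (k : ℕ) : ℝ :=
  log k + ∑ l ∈ k.primeFactors, log l / (l - 1)

theorem chebyshevConst_nonneg (k : ℕ) : 0 ≤ chebyshevConst k := by
  refine add_nonneg (log_natCast_nonneg k) (sum_nonneg fun l hl ↦ ?_)
  have hl1 : (1 : ℝ) ≤ l := mod_cast (Nat.prime_of_mem_primeFactors hl).one_lt.le
  exact div_nonneg (log_nonneg hl1) (sub_nonneg.2 hl1)

/-- The second Chebyshev function `ψ(x; k, a)` of a residue class. -/
noncomputable def psiMod (a : ZMod k) (x : ℕ) : ℝ := ∑ d ∈ residueIoc a 0 x, Λ d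

/-- The first Chebyshev function `θ(x; k, a)` of a residue class. -/
noncomputable def thetaMod (a : ZMod k) (x : ℕ) : ℝ := ∑ p ∈ residueIoc a 0 x with p.Prime, log p

/-- For a unit `a`, the logarithm of the part coprime to `k` of `(∏ m) / M !`, where `m` runs over
the `m ≤ kM` with `m ≡ a (mod k)`, expanded over prime powers (see `excess_eq`). -/
noncomputable def excess (a : ZMod k) (M : ℕ) : ℝ :=
  ∑ d ∈ Ioc 0 (k * M) with d.Coprime k,
    Λ d * (residueCount (a * (d : ZMod k)⁻¹) (k * M / d) - (M / d : ℕ))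

theorem mul_div_div_cancel_left [NeZero k] (M d : ℕ) : k * M / d / k = M / d := by
  rw [Nat.div_right_comm, Nat.mul_div_cancel_left M (NeZero.pos k)]

theorem psiMod_mono (a : ZMod k) : Monotone (psiMod a) := fun _ _ h ↦
  sum_le_sum_of_subset_of_nonneg (residueIoc_mono_right a 0 h) fun _ _ _ ↦ vonMangoldt_nonneg

theorem psiMod_sub_le_thetaMod (a : ZMod k) {x : ℕ} (hx : 1 ≤ x) :
    psiMod a x - 2 * √x * log x ≤ thetaMod a x := by
  have hsplit : psiMod a x = thetaMod a x + ∑ d ∈ residueIoc a 0 x with ¬ d.Prime, Λ d := by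
    rw [psiMod, ← sum_filter_add_sum_filter_not _ Nat.Prime, thetaMod]
    congr 1
    exact sum_congr rfl fun p hp ↦ vonMangoldt_apply_prime (mem_filter.1 hp).2
  have hpowers : ∑ d ∈ residueIoc a 0 x with ¬ d.Prime, Λ d ≤ 2 * √x * log x :=
    calc ∑ d ∈ residueIoc a 0 x with ¬ d.Prime, Λ d
        ≤ ∑ d ∈ Ioc 0 x with ¬ d.Prime, Λ d :=
          sum_le_sum_of_subset_of_nonneg (filter_subset_filter _ (residueIoc_subset_Ioc a 0 x))
            fun _ _ _ ↦ vonMangoldt_nonneg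
      _ = Chebyshev.psi x - Chebyshev.theta x := by
          rw [Chebyshev.psi_sub_theta_eq_sum_not_prime, Nat.floor_natCast]
      _ ≤ 2 * √x * log x := Chebyshev.psi_sub_theta_le (mod_cast hx)
  linarith

theorem thetaMod_le_log_four_mul (a : ZMod k) (x : ℕ) : thetaMod a x ≤ log 4 * x :=
  calc thetaMod a x
      ≤ ∑ p ∈ Ioc 0 x with p.Prime, log p :=
        sum_le_sum_of_subset_of_nonneg (filter_subset_filter _ (residueIoc_subset_Ioc a 0 x))
          fun p _ _ ↦ log_natCast_nonneg p
    _ = Chebyshev.theta x := by rw [Chebyshev.theta, Nat.floor_natCast]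
    _ ≤ log 4 * x := Chebyshev.theta_le_log4_mul_x x.cast_nonneg

theorem coprime_of_natCast_eq {a : ZMod k} (ha : IsUnit a) {d : ℕ} (hd : (d : ZMod k) = a) :
    d.Coprime k :=
  (ZMod.isUnit_iff_coprime d k).1 (hd ▸ ha)

theorem coprime_and_natCast_eq_mul_inv_iff {a : ZMod k} (ha : IsUnit a) {d b : ℕ} :
    d.Coprime k ∧ (b : ZMod k) = a * (d : ZMod k)⁻¹ ↔ ((d * b : ℕ) : ZMod k) = a :=
  ⟨fun h ↦ (natCast_mul_eq_iff h.1).2 h.2, fun h ↦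
    have hd := (coprime_of_natCast_eq ha h).coprime_mul_right
    ⟨hd, (natCast_mul_eq_iff hd).1 h⟩⟩

variable [NeZero k]

theorem excess_eq {a : ZMod k} (ha : IsUnit a) (M : ℕ) :
    excess a M = ∑ m ∈ residueIoc a 0 (k * M), log m - log (M ! : ℕ) +
      ∑ l ∈ k.primeFactors, (M !).factorization l * log l := by
  have hM : M ≤ k * M := Nat.le_mul_of_pos_left M (NeZero.pos k)
  have hcop : ∑ d ∈ Ioc 0 (k * M) with ¬ d.Coprime k, Λ d * (M / d : ℕ) =
      ∑ l ∈ k.primeFactors, (M !).factorization l * log l := by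
    rw [sum_not_coprime_vonMangoldt_mul (NeZero.ne k)]
    exact sum_congr rfl fun l hl ↦
      sum_vonMangoldt_mul_div_of_dvd (Nat.prime_of_mem_primeFactors hl) hM
  rw [sum_log_residueIoc_eq ha, log_factorial_eq_sum_vonMangoldt hM, ← hcop,
    ← sum_filter_add_sum_filter_not (Ioc 0 (k * M)) (·.Coprime k) (fun d ↦ Λ d * (M / d : ℕ))]
  simp only [excess, mul_sub, sum_sub_distrib]
  ring

theorem excess_le {a : ZMod k} (ha : IsUnit a) (M : ℕ) : excess a M ≤ M * chebyshevConst k := by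
  have hlegendre : ∑ l ∈ k.primeFactors, (M !).factorization l * log l ≤
      M * ∑ l ∈ k.primeFactors, log l / (l - 1) := by
    rw [mul_sum]
    exact sum_le_sum fun l hl ↦
      factorization_factorial_mul_log_le (Nat.prime_of_mem_primeFactors hl) M
  rw [excess_eq ha, chebyshevConst]
  linarith [sum_log_residueIoc_le a M]

theorem le_excess {a : ZMod k} (ha : IsUnit a) {M : ℕ} (hM : M ≠ 0) :
    M * chebyshevConst k - (#k.primeFactors + 1) * log (k * M : ℕ) ≤ excess a M := by
  have hlegendre : M * ∑ l ∈ k.primeFactors, log l / (l - 1) -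
      #k.primeFactors * log (k * M : ℕ) ≤
        ∑ l ∈ k.primeFactors, (M !).factorization l * log l := by
    rw [mul_sum, ← nsmul_eq_mul #k.primeFactors, ← sum_const, ← sum_sub_distrib]
    refine sum_le_sum fun l hl ↦ le_trans ?_
      (le_factorization_factorial_mul_log (Nat.prime_of_mem_primeFactors hl) hM)
    have hlk : log M + log l ≤ log (k * M : ℕ) := by
      have hl0 := (Nat.prime_of_mem_primeFactors hl).pos
      rw [← log_mul (by positivity) (by positivity), ← Nat.cast_mul, mul_comm k]
      gcongr
      exact Nat.le_of_mem_primeFactors hl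
    linarith
  obtain ⟨M, rfl⟩ := Nat.exists_eq_add_one_of_ne_zero hM
  have hfactorial : log ((M + 1) ! : ℕ) = log (M + 1 : ℕ) + log (M ! : ℕ) := by
    rw [Nat.factorial_succ, Nat.cast_mul, log_mul (by positivity) (by positivity)]
  have hkM : log (k * (M + 1) : ℕ) = log k + log (M + 1 : ℕ) := by
    rw [Nat.cast_mul, log_mul (NeZero.ne _) (by positivity)]
  have hprod := le_sum_log_residueIoc a M
  rw [excess_eq ha, chebyshevConst, hfactorial]
  rw [Nat.cast_succ] at hlegendre hkM ⊢
  linarith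

-- A term `d ∈ (M, kM]` with `d ≡ a` contributes `Λ d * residueCount 1 (kM / d) ≥ Λ d` to `excess`.
theorem sum_vonMangoldt_residueIoc_le_excess {a : ZMod k} (ha : IsUnit a) (M : ℕ) :
    ∑ d ∈ residueIoc a M (k * M), Λ d ≤ excess a M := by
  have hnonneg : ∀ d : ℕ,
      0 ≤ Λ d * (residueCount (a * (d : ZMod k)⁻¹) (k * M / d) - (M / d : ℕ)) :=
    fun d ↦ mul_nonneg vonMangoldt_nonneg <| sub_nonneg.2 <| Nat.cast_le.2 <|
      (mul_div_div_cancel_left M d).symm.trans_le (div_le_residueCount _ _)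
  have hsub : residueIoc a M (k * M) ⊆ {d ∈ Ioc 0 (k * M) | d.Coprime k} := fun d hd ↦ by
    obtain ⟨⟨hMd, hdk⟩, hda⟩ := mem_residueIoc.1 hd
    exact mem_filter.2 ⟨mem_Ioc.2 ⟨(Nat.zero_le M).trans_lt hMd, hdk⟩, coprime_of_natCast_eq ha hda⟩
  refine le_trans (sum_le_sum fun d hd ↦ ?_)
    (sum_le_sum_of_subset_of_nonneg hsub fun d _ _ ↦ hnonneg d)
  obtain ⟨⟨hMd, hdk⟩, rfl⟩ := mem_residueIoc.1 hd
  have hone : 1 ∈ residueIoc (1 : ZMod k) 0 (k * M / d) :=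
    mem_residueIoc.2 ⟨⟨one_pos, Nat.div_pos hdk ((Nat.zero_le M).trans_lt hMd)⟩, Nat.cast_one⟩
  rw [ZMod.coe_mul_inv_eq_one d (coprime_of_natCast_eq ha rfl), Nat.div_eq_of_lt hMd, Nat.cast_zero,
    sub_zero]
  exact le_mul_of_one_le_right vonMangoldt_nonneg (mod_cast card_pos.2 ⟨1, hone⟩)

theorem excess_le_sum_psiMod {a : ZMod k} (ha : IsUnit a) (M : ℕ) :
    excess a M ≤ ∑ b ∈ Ioc 0 k with b.Coprime k, psiMod (a * (b : ZMod k)⁻¹) (k * M / b) := by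
  calc excess a M
      ≤ ∑ d ∈ Ioc 0 (k * M) with d.Coprime k,
          Λ d * residueCount (a * (d : ZMod k)⁻¹) (min k (k * M / d)) := by
        refine sum_le_sum fun d _ ↦ mul_le_mul_of_nonneg_left ?_ vonMangoldt_nonneg
        have hcount := residueCount_le (a * (d : ZMod k)⁻¹) (k * M / d)
        rw [mul_div_div_cancel_left] at hcount
        rw [sub_le_iff_le_add']
        exact_mod_cast hcount
    _ = ∑ d ∈ Ioc 0 (k * M) with d.Coprime k,
          ∑ _ ∈ residueIoc (a * (d : ZMod k)⁻¹) 0 (min k (k * M / d)), Λ d := by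
        simp [residueCount, mul_comm]
    _ = ∑ b ∈ Ioc 0 k with b.Coprime k, psiMod (a * (b : ZMod k)⁻¹) (k * M / b) := by
        refine sum_comm' fun d b ↦ ?_
        have hdb := coprime_and_natCast_eq_mul_inv_iff ha (d := d) (b := b)
        have hbd := coprime_and_natCast_eq_mul_inv_iff ha (d := b) (b := d)
        rw [mul_comm b d] at hbd
        simp only [mem_filter, mem_Ioc, mem_residueIoc, le_min_iff]
        constructor
        · rintro ⟨⟨⟨hd0, -⟩, hd⟩, ⟨hb0, hbk, hle⟩, hb⟩
          obtain ⟨hb', hd'⟩ := hbd.2 (hdb.1 ⟨hd, hb⟩)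
          rw [Nat.le_div_iff_mul_le hd0, mul_comm, ← Nat.le_div_iff_mul_le hb0] at hle
          exact ⟨⟨⟨hd0, hle⟩, hd'⟩, ⟨hb0, hbk⟩, hb'⟩
        · rintro ⟨⟨⟨hd0, hle⟩, hd⟩, ⟨hb0, hbk⟩, hb⟩
          obtain ⟨hd', hb'⟩ := hdb.2 (hbd.1 ⟨hb, hd⟩)
          have hdkM := hle.trans (Nat.div_le_self _ _)
          rw [Nat.le_div_iff_mul_le hb0, mul_comm, ← Nat.le_div_iff_mul_le hd0] at hle
          exact ⟨⟨⟨hd0, hdkM⟩, hd'⟩, ⟨hb0, hbk, hle⟩, hb'⟩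

theorem psiMod_mul_le {a : ZMod k} (ha : IsUnit a) (M : ℕ) :
    psiMod a (k * M) ≤ psiMod a M + M * chebyshevConst k := by
  rw [psiMod, ← sum_residueIoc_consecutive a _ M.zero_le (Nat.le_mul_of_pos_left M (NeZero.pos k))]
  gcongr
  · rfl
  · exact (sum_vonMangoldt_residueIoc_le_excess ha M).trans (excess_le ha M)

theorem psiMod_le_psiMod_mul_div_add_log (a : ZMod k) (x : ℕ) :
    psiMod a x ≤ psiMod a (k * (x / k)) + log x := by
  rw [psiMod, ← sum_residueIoc_consecutive a _ (k * (x / k)).zero_le (Nat.mul_div_le x k)]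
  gcongr
  · rfl
  have hcard : #(residueIoc a (k * (x / k)) x) ≤ 1 :=
    card_residueIoc_add_self a (k * (x / k)) ▸
      card_le_card (residueIoc_mono_right a _ (Nat.lt_mul_div_succ x (NeZero.pos k)).le)
  calc ∑ d ∈ residueIoc a (k * (x / k)) x, Λ d
      ≤ #(residueIoc a (k * (x / k)) x) • log x := by
        refine sum_le_card_nsmul _ _ _ fun d hd ↦ vonMangoldt_le_log.trans ?_
        obtain ⟨⟨hd0, hdx⟩, -⟩ := mem_residueIoc.1 hd
        exact log_le_log (mod_cast (Nat.zero_le _).trans_lt hd0) (mod_cast hdx)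
    _ ≤ log x := by
        rw [nsmul_eq_mul]
        exact mul_le_of_le_one_left (log_natCast_nonneg x) (mod_cast hcard)

theorem psiMod_le {a : ZMod k} (ha : IsUnit a) (hk : 1 < k) (x : ℕ) :
    psiMod a x ≤ x * (chebyshevConst k / (k - 1)) + (Nat.log k x + 1) * log x := by
  have hk1 : (0 : ℝ) < k - 1 := sub_pos.2 (mod_cast hk)
  induction x using Nat.strong_induction_on with
  | h x ih =>
    have hstep := (psiMod_le_psiMod_mul_div_add_log a x).trans
      (add_le_add_left (psiMod_mul_le ha (x / k)) _)
    obtain hxk | hkx := lt_or_ge x k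
    · have hnonneg : 0 ≤ x * (chebyshevConst k / (k - 1)) := by
        have := chebyshevConst_nonneg k
        positivity
      simp only [psiMod, residueIoc, Nat.div_eq_of_lt hxk, le_refl, Ioc_eq_empty_of_le,
        filter_empty, sum_empty, Nat.cast_zero, zero_mul, add_zero, zero_add, Nat.log_of_lt hxk,
        one_mul] at hstep ⊢
      linarith
    · have hx : 0 < x := by omega
      have hlog : ((Nat.log k (x / k) : ℝ) + 1) * log (x / k : ℕ) ≤ Nat.log k x * log x := by
        rw [Nat.log_of_one_lt_of_le hk hkx, Nat.cast_add_one]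
        gcongr
        · exact_mod_cast Nat.div_pos hkx (NeZero.pos k)
        · exact Nat.div_le_self x k
      have hmain : (x / k : ℕ) * (chebyshevConst k / (k - 1)) + (x / k : ℕ) * chebyshevConst k ≤
          x * (chebyshevConst k / (k - 1)) := by
        have hC := chebyshevConst_nonneg k
        calc (x / k : ℕ) * (chebyshevConst k / (k - 1)) + (x / k : ℕ) * chebyshevConst k
            = (x / k : ℕ) * k * (chebyshevConst k / (k - 1)) := by field_simp; ring
          _ ≤ x * (chebyshevConst k / (k - 1)) := by
            gcongr
            exact_mod_cast Nat.div_mul_le_self x k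
      linarith [ih (x / k) (Nat.div_lt_self hx hk)]

theorem le_psiMod_mul {a : ZMod k} (ha : IsUnit a) (hk : 1 < k) {M : ℕ} (hM : M ≠ 0) :
    M * (chebyshevConst k * (1 - k / (k - 1) * ∑ b ∈ Ioc 1 k with b.Coprime k, (1 / b : ℝ))) -
        (#k.primeFactors + 1 + #{b ∈ Ioc 1 k | b.Coprime k} * (Nat.log k (k * M) + 1)) *
          log (k * M : ℕ) ≤
      psiMod a (k * M) := by
  have hk1 : (0 : ℝ) < k - 1 := sub_pos.2 (mod_cast hk)
  have hsplit : ∑ b ∈ Ioc 0 k with b.Coprime k, psiMod (a * (b : ZMod k)⁻¹) (k * M / b) =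
      psiMod a (k * M) +
        ∑ b ∈ Ioc 1 k with b.Coprime k, psiMod (a * (b : ZMod k)⁻¹) (k * M / b) := by
    simp only [sum_filter]
    rw [← sum_Ioc_consecutive _ zero_le_one hk.le, show Ioc 0 1 = {1} from rfl, sum_singleton]
    simp
  have hother : ∀ b ∈ Ioc 1 k, b.Coprime k → psiMod (a * (b : ZMod k)⁻¹) (k * M / b) ≤
      M * chebyshevConst k * (k / (k - 1)) * (1 / b) +
        (Nat.log k (k * M) + 1) * log (k * M : ℕ) := by
    intro b hb hcop
    have hb0 : 0 < b := by grind
    have hunit : IsUnit (a * (b : ZMod k)⁻¹) :=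
      ha.mul (IsUnit.of_mul_eq_one_right _ (ZMod.coe_mul_inv_eq_one b hcop))
    have hpos : 0 < k * M / b :=
      Nat.div_pos ((mem_Ioc.1 hb).2.trans (Nat.le_mul_of_pos_right k (Nat.pos_of_ne_zero hM))) hb0
    have hC := chebyshevConst_nonneg k
    calc psiMod (a * (b : ZMod k)⁻¹) (k * M / b)
        ≤ (k * M / b : ℕ) * (chebyshevConst k / (k - 1)) +
            (Nat.log k (k * M / b) + 1) * log (k * M / b : ℕ) := psiMod_le hunit hk _
      _ ≤ (k * M : ℕ) / b * (chebyshevConst k / (k - 1)) +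
            (Nat.log k (k * M) + 1) * log (k * M : ℕ) := by
          gcongr
          · exact Nat.cast_div_le
          all_goals exact Nat.div_le_self _ _
      _ = _ := by push_cast; ring
  have hsum := sum_le_sum fun b hb ↦ hother b (mem_filter.1 hb).1 (mem_filter.1 hb).2
  rw [sum_add_distrib, sum_const, ← mul_sum, nsmul_eq_mul] at hsum
  have hexcess := (le_excess ha hM).trans (excess_le_sum_psiMod ha M)
  linear_combination hexcess + hsplit + hsum

theorem sum_log_primes_residueIoc_le {a : ZMod k} (ha : IsUnit a) {T n : ℕ} (hT : n / k + 1 ≤ T) :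
    ∑ p ∈ residueIoc a T n with p.Prime, log p ≤ (n / k + 1) * chebyshevConst k := by
  have hsub : {p ∈ residueIoc a T n | p.Prime} ⊆
      residueIoc a (n / k + 1) (k * (n / k + 1)) := fun p hp ↦ by
    obtain ⟨⟨hTp, hpn⟩, hpa⟩ := mem_residueIoc.1 (mem_filter.1 hp).1
    exact mem_residueIoc.2
      ⟨⟨hT.trans_lt hTp, hpn.trans (Nat.lt_mul_div_succ n (NeZero.pos k)).le⟩, hpa⟩
  calc ∑ p ∈ residueIoc a T n with p.Prime, log p
      = ∑ p ∈ residueIoc a T n with p.Prime, Λ p :=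
        sum_congr rfl fun p hp ↦ (vonMangoldt_apply_prime (mem_filter.1 hp).2).symm
    _ ≤ ∑ p ∈ residueIoc a (n / k + 1) (k * (n / k + 1)), Λ p :=
        sum_le_sum_of_subset_of_nonneg hsub fun _ _ _ ↦ vonMangoldt_nonneg
    _ ≤ (n / k + 1 : ℕ) * chebyshevConst k :=
        (sum_vonMangoldt_residueIoc_le_excess ha _).trans (excess_le ha _)
    _ ≤ (n / k + 1) * chebyshevConst k := by
        push_cast
        gcongr
        · exact chebyshevConst_nonneg k
        · exact Nat.cast_div_le

theorem sum_log_primes_dvd_sub_le (a : ZMod k) {m : ℕ} [NeZero m] (hkm : k.Coprime m) {T n : ℕ}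
    (hT : n / (k * m) + 1 ≤ T) (hprime : ∀ l ∈ (k * m).primeFactors, l ≤ T) :
    ∑ p ∈ residueIoc a T n with p.Prime ∧ m ∣ n - p, log p ≤
      (n / (k * m) + 1) * chebyshevConst (k * m) := by
  obtain hempty | ⟨p₀, hp₀⟩ := {p ∈ residueIoc a T n | p.Prime ∧ m ∣ n - p}.eq_empty_or_nonempty
  · rw [hempty, sum_empty]
    have := chebyshevConst_nonneg (k * m)
    positivity
  simp only [mem_filter, mem_residueIoc] at hp₀
  obtain ⟨⟨⟨hTp₀, hp₀n⟩, hp₀a⟩, hp₀_prime, hmp₀⟩ := hp₀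
  have hunit : IsUnit (p₀ : ZMod (k * m)) := by
    rw [ZMod.isUnit_iff_coprime, hp₀_prime.coprime_iff_not_dvd]
    exact fun hdvd ↦ hTp₀.not_ge (hprime p₀ (by simp [hp₀_prime, hdvd, NeZero.ne]))
  have hclass : {p ∈ residueIoc a T n | p.Prime ∧ m ∣ n - p} ⊆
      {p ∈ residueIoc (p₀ : ZMod (k * m)) T n | p.Prime} := by
    intro p hp
    simp only [mem_filter, mem_residueIoc] at hp ⊢
    obtain ⟨⟨⟨hTp, hpn⟩, hpa⟩, hp_prime, hmp⟩ := hp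
    refine ⟨⟨⟨hTp, hpn⟩, ?_⟩, hp_prime⟩
    rw [ZMod.natCast_eq_natCast_iff, ← Nat.modEq_and_modEq_iff_modEq_mul hkm]
    refine ⟨(ZMod.natCast_eq_natCast_iff _ _ _).1 (hpa.trans hp₀a.symm), ?_⟩
    exact ((Nat.modEq_iff_dvd' hpn).2 hmp).trans ((Nat.modEq_iff_dvd' hp₀n).2 hmp₀).symm
  have hle := sum_log_primes_residueIoc_le hunit hT
  push_cast at hle
  exact (sum_le_sum_of_subset_of_nonneg hclass fun p _ _ ↦ log_natCast_nonneg p).trans hle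

theorem chebyshevConst_mul {m n : ℕ} (hmn : m.Coprime n) (hm : m ≠ 0) (hn : n ≠ 0) :
    chebyshevConst (m * n) = chebyshevConst m + chebyshevConst n := by
  rw [chebyshevConst, hmn.primeFactors_mul, sum_union hmn.disjoint_primeFactors, Nat.cast_mul,
    log_mul (mod_cast hm) (mod_cast hn), chebyshevConst, chebyshevConst]
  ring

theorem chebyshevConst_prime_pow {p e : ℕ} (hp : p.Prime) (he : e ≠ 0) :
    chebyshevConst (p ^ e) = (e + 1 / (p - 1)) * log p := by
  rw [chebyshevConst, Nat.primeFactors_pow p he, hp.primeFactors, sum_singleton, Nat.cast_pow,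
    log_pow]
  ring

end Chebyshev

section ModTwelve

theorem chebyshevConst_twelve : chebyshevConst 12 = 3 * log 2 + 3 / 2 * log 3 := by
  rw [show 12 = 2 ^ 2 * 3 ^ 1 from rfl,
    chebyshevConst_mul (by norm_num) (by norm_num) (by norm_num),
    chebyshevConst_prime_pow Nat.prime_two two_ne_zero,
    chebyshevConst_prime_pow Nat.prime_three one_ne_zero]
  norm_num

theorem lt_chebyshevConst_twelve : 3.727 < chebyshevConst 12 := by
  rw [chebyshevConst_twelve]
  linarith [log_two_gt_d9, log_three_gt_d9]

theorem chebyshevConst_twelve_lt : chebyshevConst 12 < 3.7274 := by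
  rw [chebyshevConst_twelve]
  linarith [log_two_lt_d9, log_three_lt_d9]

theorem primeFactors_twelve : Nat.primeFactors 12 = {2, 3} := by decide +kernel

theorem natLog_twelve_le (x : ℕ) : Nat.log 12 x ≤ log x / 2 := by
  have hlog : 2 ≤ log 12 := by
    rw [show (12 : ℝ) = 2 ^ 2 * 3 by norm_num, log_mul (by norm_num) (by norm_num), log_pow,
      Nat.cast_ofNat]
    linarith [log_two_gt_d9, log_three_gt_d9]
  calc (Nat.log 12 x : ℝ) ≤ logb 12 x := mod_cast natLog_le_logb x 12
    _ ≤ log x / 2 := by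
      rw [logb]
      gcongr

theorem le_psiMod_twelve {a : ZMod 12} (ha : IsUnit a) {M : ℕ} (hM : M ≠ 0) :
    1.963 * M - (6 + 1.5 * log (12 * M : ℕ)) * log (12 * M : ℕ) ≤ psiMod a (12 * M) := by
  have hcoprime : {b ∈ Ioc 1 12 | b.Coprime 12} = {5, 7, 11} := by decide
  have hfactor : (1 : ℝ) - (12 : ℕ) / ((12 : ℕ) - 1) * ∑ b ∈ {5, 7, 11}, (1 / (b : ℕ) : ℝ) =
      2231 / 4235 := by norm_num
  have hbound := le_psiMod_mul ha (by norm_num) hM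
  rw [hcoprime, primeFactors_twelve, hfactor] at hbound
  have hcard : #({2, 3} : Finset ℕ) = 2 ∧ #({5, 7, 11} : Finset ℕ) = 3 := ⟨rfl, rfl⟩
  rw [hcard.1, hcard.2] at hbound
  have hmain : 1.963 * M ≤ M * (chebyshevConst 12 * (2231 / 4235)) := by
    rw [mul_comm]
    gcongr
    linarith [lt_chebyshevConst_twelve]
  have herror : (2 + 1 + 3 * (Nat.log 12 (12 * M) + 1)) * log (12 * M : ℕ) ≤
      (6 + 1.5 * log (12 * M : ℕ)) * log (12 * M : ℕ) :=
    mul_le_mul_of_nonneg_right (by linarith [natLog_twelve_le (12 * M)]) (log_natCast_nonneg _)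
  push_cast at hbound herror ⊢
  linarith

theorem le_thetaMod_twelve {a : ZMod 12} (ha : IsUnit a) {n : ℕ} (hn : 12 ≤ n) :
    0.1635 * (n - 12) - (6 + 1.5 * log n + 2 * √n) * log n ≤ thetaMod a n := by
  have hM : n / 12 ≠ 0 := by omega
  have hle : 12 * (n / 12) ≤ n := Nat.mul_div_le n 12
  have hfloor : (n : ℝ) - 12 ≤ 12 * (n / 12 : ℕ) := by
    rw [sub_le_iff_le_add]
    exact_mod_cast show n ≤ 12 * (n / 12) + 12 by omega
  have herror : (6 + 1.5 * log (12 * (n / 12) : ℕ)) * log (12 * (n / 12) : ℕ) ≤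
      (6 + 1.5 * log n) * log n := by gcongr
  linarith [psiMod_sub_le_thetaMod a (show 1 ≤ n by omega), psiMod_mono a hle,
    le_psiMod_twelve ha hM]

-- Modulo `12`, the inequalities `4 * x ≠ 0` and `3 * x ≠ 0` mean that `3 ∤ x` and `4 ∤ x`.
theorem exists_unit_twelve (c : ZMod 12) :
    ∃ a : (ZMod 12)ˣ, 4 * (c - a) ≠ 0 ∧ 3 * (c - a) ≠ 0 := by
  decide +revert

theorem exists_prime_sq_dvd {m : ℕ} (hm : ¬ Squarefree m) (h3 : ¬ 3 ∣ m) (h4 : ¬ 4 ∣ m) :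
    ∃ q ∈ Icc 5 m.sqrt, q.Prime ∧ q ^ 2 ∣ m := by
  obtain ⟨q, hq, hqm⟩ : ∃ q, q.Prime ∧ q * q ∣ m := by
    simpa [Nat.squarefree_iff_prime_squarefree] using hm
  have hm0 : 0 < m := Nat.pos_of_ne_zero fun h ↦ h3 (h ▸ dvd_zero 3)
  have hq2 : q ≠ 2 := by rintro rfl; exact h4 hqm
  have hq3 : q ≠ 3 := by rintro rfl; exact h3 (dvd_of_mul_left_dvd hqm)
  have hq4 : q ≠ 4 := by rintro rfl; norm_num at hq
  have hq5 : 5 ≤ q := by have := hq.two_le; omega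
  exact ⟨q, mem_Icc.2 ⟨hq5, Nat.le_sqrt.2 (Nat.le_of_dvd hm0 hqm)⟩, hq, sq q ▸ hqm⟩

theorem exists_class_forall_exists_prime_sq_dvd {n : ℕ}
    (h : ∀ p ≤ n, p.Prime → ¬ 3 ∣ n - p → ¬ Squarefree (n - p)) :
    ∃ a : ZMod 12, IsUnit a ∧
      ∀ p ∈ residueIoc a 0 n, p.Prime → ∃ q ∈ Icc 5 n.sqrt, q.Prime ∧ q ^ 2 ∣ n - p := by
  obtain ⟨a, ha4, ha3⟩ := exists_unit_twelve n
  refine ⟨a, a.isUnit, fun p hp hp_prime ↦ ?_⟩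
  obtain ⟨⟨-, hpn⟩, hpa⟩ := mem_residueIoc.1 hp
  rw [← hpa, ← Nat.cast_sub hpn] at ha4 ha3
  have h3 : ¬ 3 ∣ n - p := fun hdvd ↦
    ha4 (by exact_mod_cast (ZMod.natCast_eq_zero_iff _ 12).2 (mul_dvd_mul_left 4 hdvd))
  have h4 : ¬ 4 ∣ n - p := fun hdvd ↦
    ha3 (by exact_mod_cast (ZMod.natCast_eq_zero_iff _ 12).2 (mul_dvd_mul_left 3 hdvd))
  obtain ⟨q, hq, hq_prime, hdvd⟩ := exists_prime_sq_dvd (h p hpn hp_prime h3) h3 h4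
  exact ⟨q, Icc_subset_Icc_right (Nat.sqrt_le_sqrt (n.sub_le p)) hq, hq_prime, hdvd⟩

theorem coprime_twelve_prime_sq {q : ℕ} (hq : q.Prime) (hq5 : 5 ≤ q) :
    Nat.Coprime 12 (q ^ 2) :=
  .pow_right _ (((Nat.Prime.coprime_iff_not_dvd hq).2 fun hdvd ↦ by
    have := Nat.le_of_dvd (by norm_num) hdvd
    interval_cases q <;> revert hq hdvd <;> decide).symm)

theorem sum_log_primes_sq_dvd_sub_le (a : ZMod 12) {q T n : ℕ} (hq : q.Prime) (hq5 : 5 ≤ q)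
    (hqT : q ≤ T) (hnT : n / 300 + 1 ≤ T) :
    ∑ p ∈ residueIoc a T n with p.Prime ∧ q ^ 2 ∣ n - p, log p ≤
      (n / (12 * q ^ 2) + 1) * chebyshevConst (12 * q ^ 2) := by
  have : NeZero (q ^ 2) := ⟨pow_ne_zero 2 hq.ne_zero⟩
  have hcoprime := coprime_twelve_prime_sq hq hq5
  have hfactors : ∀ l ∈ (12 * q ^ 2).primeFactors, l ≤ T := by
    intro l hl
    simp only [hcoprime.primeFactors_mul, Nat.primeFactors_prime_pow two_ne_zero hq,
      primeFactors_twelve, mem_union, mem_insert, mem_singleton] at hl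
    omega
  have hdiv : n / (12 * q ^ 2) ≤ n / 300 := by
    gcongr
    nlinarith
  exact_mod_cast sum_log_primes_dvd_sub_le a hcoprime ((Nat.succ_le_succ hdiv).trans hnT) hfactors

theorem thetaMod_twelve_le {a : ZMod 12} {n : ℕ} (hn : 300 ^ 2 ≤ n)
    (h : ∀ p ∈ residueIoc a 0 n, p.Prime → ∃ q ∈ Icc 5 n.sqrt, q.Prime ∧ q ^ 2 ∣ n - p) :
    thetaMod a n ≤ log 4 * (n / 300 + 1) + ∑ q ∈ Icc 5 n.sqrt with q.Prime,
      (n / (12 * q ^ 2) + 1) * chebyshevConst (12 * q ^ 2) := by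
  obtain ⟨T, hT⟩ : ∃ T, T = n / 300 + 1 := ⟨_, rfl⟩
  have hsqrt : n.sqrt ≤ T := by
    rw [hT]
    exact Nat.le_succ_of_le ((Nat.le_div_iff_mul_le (by norm_num)).2
      ((Nat.mul_le_mul_left _ (Nat.le_sqrt'.2 hn)).trans n.sqrt_le))
  have hsmall : thetaMod a T ≤ log 4 * (n / 300 + 1) := by
    refine (thetaMod_le_log_four_mul a T).trans ?_
    rw [hT, Nat.cast_add_one]
    gcongr
    exact Nat.cast_div_le
  have hcover : ∀ p ∈ {p ∈ residueIoc a T n | p.Prime},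
      ∃ q ∈ {q ∈ Icc 5 n.sqrt | q.Prime}, q ^ 2 ∣ n - p := by
    intro p hp
    obtain ⟨hp, hp_prime⟩ := mem_filter.1 hp
    obtain ⟨q, hq, hq_prime, hdvd⟩ := h p (residueIoc_mono_left a n T.zero_le hp) hp_prime
    exact ⟨q, mem_filter.2 ⟨hq, hq_prime⟩, hdvd⟩
  have hsplit := sum_residueIoc_consecutive a (fun p ↦ if p.Prime then log p else 0) T.zero_le
    (show T ≤ n by omega)
  simp only [← sum_filter] at hsplit
  rw [thetaMod, ← hsplit]
  refine add_le_add hsmall ((sum_le_sum_sum_filter_of_exists hcover fun p _ ↦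
    log_natCast_nonneg p).trans (sum_le_sum fun q hq ↦ ?_))
  obtain ⟨hq, hq_prime⟩ := mem_filter.1 hq
  obtain ⟨hq5, hqn⟩ := mem_Icc.1 hq
  rw [filter_filter]
  exact sum_log_primes_sq_dvd_sub_le a hq_prime hq5 (hqn.trans hsqrt) hT.ge

theorem chebyshevConst_twelve_mul_sq {q : ℕ} (hq : q.Prime) (hq5 : 5 ≤ q) :
    chebyshevConst (12 * q ^ 2) = chebyshevConst 12 + (2 + 1 / (q - 1)) * log q := by
  rw [chebyshevConst_mul (coprime_twelve_prime_sq hq hq5) (by norm_num)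
    (pow_ne_zero 2 hq.ne_zero), chebyshevConst_prime_pow hq two_ne_zero, Nat.cast_ofNat]

theorem chebyshevConst_twelve_mul_sq_le_of_log_le {q : ℕ} (hq : q.Prime) (hq5 : 5 ≤ q) {c : ℝ}
    (hc : log q ≤ c * (q - 1)) : chebyshevConst (12 * q ^ 2) ≤ 3.7274 + c + 2 * log q := by
  have hq1 : (0 : ℝ) < q - 1 := sub_pos.2 (mod_cast hq.one_lt)
  have hdiv : 1 / (q - 1) * log q ≤ c := by
    rwa [one_div_mul_eq_div, div_le_iff₀ hq1]
  rw [chebyshevConst_twelve_mul_sq hq hq5]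
  linarith [chebyshevConst_twelve_lt]

theorem chebyshevConst_twelve_mul_sq_le {q : ℕ} (hq : q.Prime) (hq5 : 5 ≤ q) :
    chebyshevConst (12 * q ^ 2) ≤ 4.138 + 2 * log q := by
  have hq5' : (5 : ℝ) ≤ q := mod_cast hq5
  have hlog := log_le_log_add_sub_div (x := q) (y := 5) (by positivity) (by norm_num)
  have h := chebyshevConst_twelve_mul_sq_le_of_log_le hq hq5 (c := 0.41)
    (by linarith [log_five_lt_d9])
  linarith

theorem chebyshevConst_twelve_mul_sq_le_of_le {q : ℕ} (hq : q.Prime) (hq18 : 18 ≤ q) :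
    chebyshevConst (12 * q ^ 2) ≤ 2 * (1.952 + log q) := by
  have hq18' : (18 : ℝ) ≤ q := mod_cast hq18
  have hlog := log_le_log_add_sub_div (x := q) (y := 16) (by positivity) (by norm_num)
  have hlog16 : log 16 = 4 * log 2 := by
    rw [show (16 : ℝ) = 2 ^ 4 by norm_num, log_pow, Nat.cast_ofNat]
  have h := chebyshevConst_twelve_mul_sq_le_of_log_le hq (by omega) (c := 0.175)
    (by linarith [log_two_lt_d9])
  linarith

theorem sum_chebyshevConst_small_primes_le :
    ∑ q ∈ {5, 7, 11, 13, 17}, chebyshevConst (12 * q ^ 2) / (q : ℝ) ^ 2 ≤ 0.62 := by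
  have hlog5 : log (5 : ℕ) ≤ (7 : ℕ) / (3 : ℕ) * log (2 : ℕ) :=
    log_le_div_mul_log_of_pow_le_pow (by norm_num) (by norm_num) (by norm_num)
  have hlog7 : log (7 : ℕ) ≤ (17 : ℕ) / (6 : ℕ) * log (2 : ℕ) :=
    log_le_div_mul_log_of_pow_le_pow (by norm_num) (by norm_num) (by norm_num)
  have hlog11 : log (11 : ℕ) ≤ (7 : ℕ) / (2 : ℕ) * log (2 : ℕ) :=
    log_le_div_mul_log_of_pow_le_pow (by norm_num) (by norm_num) (by norm_num)
  have hlog13 : log (13 : ℕ) ≤ (15 : ℕ) / (4 : ℕ) * log (2 : ℕ) :=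
    log_le_div_mul_log_of_pow_le_pow (by norm_num) (by norm_num) (by norm_num)
  have hlog17 : log (17 : ℕ) ≤ (33 : ℕ) / (8 : ℕ) * log (2 : ℕ) :=
    log_le_div_mul_log_of_pow_le_pow (by norm_num) (by norm_num) (by norm_num)
  simp only [mem_insert, mem_singleton, sum_insert, sum_singleton, Nat.reduceEqDiff, or_self,
    not_false_eq_true]
  rw [chebyshevConst_twelve_mul_sq (q := 5) (by norm_num) (by norm_num),
    chebyshevConst_twelve_mul_sq (q := 7) (by norm_num) (by norm_num),
    chebyshevConst_twelve_mul_sq (q := 11) (by norm_num) (by norm_num),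
    chebyshevConst_twelve_mul_sq (q := 13) (by norm_num) (by norm_num),
    chebyshevConst_twelve_mul_sq (q := 17) (by norm_num) (by norm_num)]
  norm_num at hlog5 hlog7 hlog11 hlog13 hlog17 ⊢
  linarith [chebyshevConst_twelve_lt, log_two_lt_d9]

theorem sum_chebyshevConst_large_primes_le (r : ℕ) :
    ∑ q ∈ Ioc 17 r with q.Prime, chebyshevConst (12 * q ^ 2) / (q : ℝ) ^ 2 ≤ 0.69 := by
  have hlog : log (17 : ℕ) ≤ (33 : ℕ) / (8 : ℕ) * log (2 : ℕ) :=
    log_le_div_mul_log_of_pow_le_pow (by simp) (by simp) (by simp)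
  calc ∑ q ∈ Ioc 17 r with q.Prime, chebyshevConst (12 * q ^ 2) / (q : ℝ) ^ 2
      ≤ ∑ q ∈ Ioc 17 r with q.Prime, 2 * ((1.952 + log q) / q ^ 2) := by
        refine sum_le_sum fun q hq ↦ ?_
        obtain ⟨hq, hq_prime⟩ := mem_filter.1 hq
        rw [← mul_div_assoc]
        gcongr
        exact chebyshevConst_twelve_mul_sq_le_of_le hq_prime (mem_Ioc.1 hq).1
    _ ≤ ∑ q ∈ Ioc 17 r, 2 * ((1.952 + log q) / q ^ 2) :=
        sum_le_sum_of_subset_of_nonneg (filter_subset _ _) fun q _ _ ↦ by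
          have := log_natCast_nonneg q
          positivity
    _ ≤ 2 * ((1.952 + 1 + log (17 : ℕ)) / (17 : ℕ)) := by
        rw [← mul_sum]
        gcongr
        exact sum_Ioc_add_log_div_sq_le (by norm_num) (by norm_num) r
    _ ≤ 0.69 := by
        push_cast at hlog ⊢
        linarith [log_two_lt_d9]

theorem sum_chebyshevConst_twelve_mul_sq_div_sq_le (r : ℕ) :
    ∑ q ∈ Icc 5 r with q.Prime, chebyshevConst (12 * q ^ 2) / (q : ℝ) ^ 2 ≤ 1.31 := by
  have hsub : {q ∈ Icc 5 r | q.Prime} ⊆ {5, 7, 11, 13, 17} ∪ {q ∈ Ioc 17 r | q.Prime} := by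
    intro q hq
    obtain ⟨hq, hq_prime⟩ := mem_filter.1 hq
    obtain ⟨hq5, hqr⟩ := mem_Icc.1 hq
    obtain hq17 | hq17 := le_or_gt q 17
    · refine mem_union_left _ ?_
      interval_cases q <;> first | decide | exact absurd hq_prime (by decide)
    · exact mem_union_right _ (mem_filter.2 ⟨mem_Ioc.2 ⟨hq17, hqr⟩, hq_prime⟩)
  have hdisj : Disjoint {5, 7, 11, 13, 17} {q ∈ Ioc 17 r | q.Prime} := by
    rw [disjoint_left]
    intro q hq
    fin_cases hq <;> simp
  calc ∑ q ∈ Icc 5 r with q.Prime, chebyshevConst (12 * q ^ 2) / (q : ℝ) ^ 2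
      ≤ ∑ q ∈ {5, 7, 11, 13, 17} ∪ {q ∈ Ioc 17 r | q.Prime},
          chebyshevConst (12 * q ^ 2) / (q : ℝ) ^ 2 :=
        sum_le_sum_of_subset_of_nonneg hsub fun q _ _ ↦
          div_nonneg (chebyshevConst_nonneg _) (by positivity)
    _ ≤ 0.62 + 0.69 := by
        rw [sum_union hdisj]
        exact add_le_add sum_chebyshevConst_small_primes_le (sum_chebyshevConst_large_primes_le r)
    _ = 1.31 := by norm_num

theorem sum_chebyshevConst_twelve_mul_sq_le (r : ℕ) :
    ∑ q ∈ Icc 5 r with q.Prime, chebyshevConst (12 * q ^ 2) ≤ r * (4.138 + 2 * log r) := by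
  have hterm : ∀ q ∈ {q ∈ Icc 5 r | q.Prime},
      chebyshevConst (12 * q ^ 2) ≤ 4.138 + 2 * log r := by
    intro q hq
    obtain ⟨hq, hq_prime⟩ := mem_filter.1 hq
    obtain ⟨hq5, hqr⟩ := mem_Icc.1 hq
    have hlog : log q ≤ log r := log_le_log (by positivity) (mod_cast hqr)
    linarith [chebyshevConst_twelve_mul_sq_le hq_prime hq5]
  have hcard : #{q ∈ Icc 5 r | q.Prime} ≤ r :=
    (card_filter_le _ _).trans (by rw [Nat.card_Icc]; omega)
  refine (sum_le_card_nsmul _ _ _ hterm).trans ?_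
  rw [nsmul_eq_mul]
  have := log_natCast_nonneg r
  gcongr

theorem sum_progressions_le {n : ℕ} (hn : 0 < n) :
    ∑ q ∈ Icc 5 n.sqrt with q.Prime, (n / (12 * q ^ 2) + 1) * chebyshevConst (12 * q ^ 2) ≤
      1.31 / 12 * n + √n * (4.138 + 2 * log √n) := by
  have hsplit : ∑ q ∈ Icc 5 n.sqrt with q.Prime,
      ((n : ℝ) / (12 * q ^ 2) + 1) * chebyshevConst (12 * q ^ 2) =
      n / 12 * ∑ q ∈ Icc 5 n.sqrt with q.Prime, chebyshevConst (12 * q ^ 2) / (q : ℝ) ^ 2 +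
        ∑ q ∈ Icc 5 n.sqrt with q.Prime, chebyshevConst (12 * q ^ 2) := by
    rw [mul_sum, ← sum_add_distrib]
    refine sum_congr rfl fun q _ ↦ ?_
    ring
  rw [hsplit]
  have hsqrt : (n.sqrt : ℝ) ≤ √n := nat_sqrt_le_real_sqrt
  have hmain : (n : ℝ) / 12 * ∑ q ∈ Icc 5 n.sqrt with q.Prime,
      chebyshevConst (12 * q ^ 2) / (q : ℝ) ^ 2 ≤ n / 12 * 1.31 := by
    gcongr
    exact sum_chebyshevConst_twelve_mul_sq_div_sq_le _
  have hrest : (n.sqrt : ℝ) * (4.138 + 2 * log n.sqrt) ≤ √n * (4.138 + 2 * log √n) := by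
    have := log_natCast_nonneg n.sqrt
    gcongr
  linarith [sum_chebyshevConst_twelve_mul_sq_le n.sqrt]

theorem sum_progressions_lt {n : ℕ} (hn : 1000 ^ 2 ≤ n) :
    log 4 * (n / 300 + 1) + (1.31 / 12 * n + √n * (4.138 + 2 * log √n)) <
      0.1635 * (n - 12) - (6 + 1.5 * log n + 2 * √n) * log n := by
  have hs : 1000 ≤ √(n : ℝ) := by
    rw [le_sqrt (by norm_num) n.cast_nonneg]
    norm_num
    exact_mod_cast hn
  have hsq : (n : ℝ) = √n ^ 2 := (sq_sqrt n.cast_nonneg).symm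
  have hlogn : log n = 2 * log √n := by
    rw [log_sqrt n.cast_nonneg]
    ring
  have hlog4 : log 4 < 1.3863 := by
    rw [show (4 : ℝ) = 2 ^ 2 by norm_num, log_pow, Nat.cast_ofNat]
    linarith [log_two_lt_d9]
  have hlog : log √n ≤ 5.932 + √n / 1000 := by
    have h1000 : log (1000 : ℕ) ≤ (10 : ℕ) / (1 : ℕ) * log (2 : ℕ) :=
      log_le_div_mul_log_of_pow_le_pow (by simp) (by simp) (by simp)
    have htangent := log_le_log_add_sub_div (x := √n) (y := 1000) (by linarith) (by norm_num)
    norm_num at h1000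
    linarith [log_two_lt_d9]
  have hlog0 : 0 ≤ log √n := log_nonneg (by linarith)
  rw [hlogn]
  generalize √(n : ℝ) = s at *
  generalize log s = L at *
  rw [hsq]
  have hsL : s * L ≤ 5.932 * s + s ^ 2 / 1000 := by nlinarith
  have hL_sq : L ^ 2 ≤ (5.932 + s / 1000) ^ 2 := by gcongr
  have hlog4_mul : log 4 * (s ^ 2 / 300 + 1) ≤ 1.3863 * (s ^ 2 / 300 + 1) := by gcongr
  nlinarith [hsL, hL_sq, hlog4_mul]

theorem exists_squarefree_sub_of_large {n : ℕ} (hn : 1000 ^ 2 ≤ n) :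
    ∃ p ≤ n, p.Prime ∧ Squarefree (n - p) ∧ ¬ 3 ∣ n - p := by
  by_contra! h
  obtain ⟨a, ha, hcover⟩ := exists_class_forall_exists_prime_sq_dvd
    fun p hpn hp h3 hsq ↦ h3 (h p hpn hp hsq)
  have hupper := thetaMod_twelve_le (by omega) hcover
  have hlower := le_thetaMod_twelve ha (show 12 ≤ n by omega)
  linarith [sum_progressions_le (n := n) (by omega), sum_progressions_lt hn]

end ModTwelve

section Sieve

/-- The number whose binary digits at `0, s, 2s, …, (2 ^ i - 1) s` are `1`, by repeated doubling. -/
def multiplesMask (s : ℕ) : ℕ → ℕ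
  | 0 => 1
  | i + 1 => multiplesMask s i ||| (multiplesMask s i <<< (s * 2 ^ i))

theorem testBit_multiplesMask {s i j : ℕ} (hj : j < 2 ^ i) :
    (multiplesMask s i).testBit (s * j) := by
  induction i generalizing j with
  | zero =>
    obtain rfl : j = 0 := by simpa using hj
    simp [multiplesMask]
  | succ i ih =>
    rw [multiplesMask, Nat.testBit_or, Bool.or_eq_true]
    obtain hlt | ⟨j, rfl⟩ := (lt_or_ge j (2 ^ i)).imp_right Nat.exists_eq_add_of_le
    · exact Or.inl (ih hlt)
    · right
      rw [Nat.testBit_shiftLeft, mul_add, Nat.add_sub_cancel_left, ih (by omega)]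
      simp

/-- A number whose binary digits at those `m < N` that have a divisor in `l` are `1`. -/
def sieveMask (N : ℕ) : List ℕ → ℕ
  | [] => 0
  | s :: l => sieveMask N l ||| multiplesMask s (Nat.log2 (N / s) + 1)

theorem not_dvd_of_testBit_sieveMask {N m s : ℕ} {l : List ℕ} (hm : m < N) (hs : s ∈ l)
    (h : (sieveMask N l).testBit m = false) : ¬ s ∣ m := by
  induction l with
  | nil => simp at hs
  | cons t l ih =>
    rw [sieveMask, Nat.testBit_or, Bool.or_eq_false_iff] at h
    obtain rfl | hs := List.mem_cons.1 hs
    · rintro ⟨j, rfl⟩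
      obtain rfl | hs := Nat.eq_zero_or_pos s
      · simp [multiplesMask] at h
      have hj : j ≤ N / s := (Nat.le_div_iff_mul_le hs).2 (by lia)
      have := testBit_multiplesMask (s := s) (hj.trans_lt (Nat.lt_log2_self))
      simp [this] at h
    · exact ih hs h.1

/-- The number whose binary digits are `1` exactly at those `n < N` such that every `p ∈ l` with
`p ≤ n` has digit `1` of `B` at `n - p`. -/
def unreachableMask (N B : ℕ) : List ℕ → ℕ
  | [] => 2 ^ N - 1
  | p :: l => unreachableMask N B l &&& ((B <<< p) ||| (2 ^ p - 1))

theorem exists_testBit_sub_of_testBit_unreachableMask {N B n : ℕ} {l : List ℕ} (hn : n < N)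
    (h : (unreachableMask N B l).testBit n = false) :
    ∃ p ∈ l, p ≤ n ∧ B.testBit (n - p) = false := by
  induction l with
  | nil => simp [unreachableMask, hn] at h
  | cons p l ih =>
    rw [unreachableMask, Nat.testBit_and, Bool.and_eq_false_iff] at h
    obtain h | h := h
    · obtain ⟨p', hp', h'⟩ := ih h
      exact ⟨p', List.mem_cons_of_mem p hp', h'⟩
    · simp only [Nat.testBit_or, Nat.testBit_shiftLeft, Nat.testBit_two_pow_sub_one,
        Bool.or_eq_false_iff, decide_eq_false_iff_not, not_lt] at h
      exact ⟨p, List.mem_cons_self, h.2, by simpa [h.2] using h.1⟩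

/-- The moduli `3` and `q ^ 2`, `2 ≤ q < r`, whose multiples are excluded as second summands.
Testing `q` for primality would cost more in kernel reduction than it saves. -/
def sieveModuli (r : ℕ) : List ℕ :=
  3 :: (List.range' 2 (r - 2)).map (· ^ 2)

theorem squarefree_of_testBit_sieveMask {r m : ℕ} (hm : m < r ^ 2)
    (h : (sieveMask (r ^ 2) (sieveModuli r)).testBit m = false) : Squarefree m ∧ ¬ 3 ∣ m := by
  have h3 : ¬ 3 ∣ m := not_dvd_of_testBit_sieveMask hm List.mem_cons_self h
  have hpos : 0 < m := Nat.pos_of_ne_zero fun h0 ↦ h3 (h0 ▸ dvd_zero 3)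
  refine ⟨Nat.squarefree_iff_prime_squarefree.2 fun q hq hdvd ↦ ?_, h3⟩
  rw [← sq] at hdvd
  have hqr : q < r := lt_of_pow_lt_pow_left₀ 2 (by simp) ((Nat.le_of_dvd hpos hdvd).trans_lt hm)
  have hmem : q ^ 2 ∈ sieveModuli r :=
    List.mem_cons_of_mem 3 (List.mem_map_of_mem (List.mem_range'_1.2 ⟨hq.two_le, by omega⟩))
  exact not_dvd_of_testBit_sieveMask hm hmem h hdvd

/-- The list of the primes below `100`, the first summands tried by the sieve. -/
def primesBelowHundred : List ℕ :=
  [2, 3, 5, 7, 11, 13, 17, 19, 23, 29, 31, 37, 41, 43, 47, 53, 59, 61, 67, 71, 73, 79, 83, 89, 97]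

theorem prime_of_mem_primesBelowHundred : ∀ p ∈ primesBelowHundred, p.Prime := by
  simp only [primesBelowHundred, List.forall_mem_cons]
  norm_num

-- The digits of `2055` are at `0`, `1`, `2` and `11`.
theorem unreachableMask_eq :
    unreachableMask (1000 ^ 2) (sieveMask (1000 ^ 2) (sieveModuli 1000)) primesBelowHundred =
      2055 := by
  decide +kernel

theorem exists_squarefree_sub_of_small {n : ℕ} (hn : 2 < n) (hne : n ≠ 11) (hlt : n < 1000 ^ 2) :
    ∃ p ≤ n, p.Prime ∧ Squarefree (n - p) ∧ ¬ 3 ∣ n - p := by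
  have hreach : (unreachableMask (1000 ^ 2) (sieveMask (1000 ^ 2) (sieveModuli 1000))
      primesBelowHundred).testBit n = false := by
    rw [unreachableMask_eq]
    obtain hn12 | hn12 := lt_or_ge n 12
    · interval_cases n <;> first | rfl | contradiction
    · exact Nat.testBit_lt_two_pow ((by norm_num : 2055 < 2 ^ 12).trans_le
        (Nat.pow_le_pow_right two_pos hn12))
  obtain ⟨p, hp, hpn, hbit⟩ := exists_testBit_sub_of_testBit_unreachableMask hlt hreach
  exact ⟨p, hpn, prime_of_mem_primesBelowHundred p hp,
    squarefree_of_testBit_sieveMask ((n.sub_le p).trans_lt hlt) hbit⟩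

end Sieve

/-- Every integer greater than two, except for 11, can be written as the sum of a prime
and a square-free number which is co-prime to three. -/
theorem prime_add_squarefree_coprime_three (n : ℕ) (hn : 2 < n) (hne : n ≠ 11) :
    ∃ p k : ℕ, p.Prime ∧ Squarefree k ∧ Nat.gcd k 3 = 1 ∧ n = p + k := by
  obtain ⟨p, hpn, hp, hsq, h3⟩ : ∃ p ≤ n, p.Prime ∧ Squarefree (n - p) ∧ ¬ 3 ∣ n - p :=
    (lt_or_ge n (1000 ^ 2)).elim (exists_squarefree_sub_of_small hn hne)
      exists_squarefree_sub_of_large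
  exact ⟨p, n - p, hp, hsq, (Nat.prime_three.coprime_iff_not_dvd.2 h3).symm,
    (Nat.add_sub_cancel' hpn).symm⟩
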